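/- arXiv:2111.07686 — 3 statements merged into one kernel-verified Lean document; each statement's English description precedes it below -/
import Mathlib

section
/- Let s > 1 be a fixed real number and define c(s,k) = (ζ(k+s)−1)/(k·B(s,k)) for integers k ≥ 1, where B(x,y) = Γ(x)Γ(y)/Γ(x+y) is the Euler beta-function. Then for every integer k with k ≥ s one has c(s,k+1)/c(s,k) < 1; in particular the sequence (c(s,k))_{k≥⌈s⌉} is strictly decreasing. -/
/-! The Gamma recurrence gives `k B(s,k) = Γ(s) Γ(k+1) / Γ(k+s)`, hence
`(k+1) B(s,k+1) = (k+1)/(k+s) · k B(s,k)`. With `x = k + s` the inequality `c(s,k+1) < c(s,k)`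
therefore says `x (ζ(x+1) - 1) < (k+1) (ζ(x) - 1)`, i.e.
`∑_{n≥2} x n^{-x-1} < ∑_{n≥2} (k+1) n^{-x}`. This holds term by term: `k ≥ s` gives
`k + 1 > x / 2 ≥ x / n` for all `n ≥ 2`. -/

/-- The Riemann zeta-function for real argument `x > 1`, as the series `∑_{n≥1} n^{-x}`. -/
noncomputable def rzeta (x : ℝ) : ℝ := ∑' n : ℕ, ((n : ℝ) + 1) ^ (-x)

/-- The Euler beta-function `B(x,y) = Γ(x)Γ(y)/Γ(x+y)`. -/
noncomputable def eulerBeta (x y : ℝ) : ℝ :=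
  Real.Gamma x * Real.Gamma y / Real.Gamma (x + y)

/-- The coefficients `c(s,k) = (ζ(k+s) - 1)/(k·B(s,k))`. -/
noncomputable def hzetaCoeff (s : ℝ) (k : ℕ) : ℝ :=
  (rzeta ((k : ℝ) + s) - 1) / ((k : ℝ) * eulerBeta s (k : ℝ))

theorem summable_add_two_rpow {x : ℝ} (hx : 1 < x) :
    Summable (fun n : ℕ => ((n : ℝ) + 2) ^ (-x)) := by
  have h := (summable_nat_add_iff 2).2 (Real.summable_nat_rpow.2 (show -x < -1 by linarith))
  simpa using h

theorem rzeta_sub_one {x : ℝ} (hx : 1 < x) :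
    rzeta x - 1 = ∑' n : ℕ, ((n : ℝ) + 2) ^ (-x) := by
  have h := (summable_nat_add_iff 1).2 (Real.summable_nat_rpow.2 (show -x < -1 by linarith))
  have h' : Summable (fun n : ℕ => ((n : ℝ) + 1) ^ (-x)) := by simpa using h
  rw [rzeta, h'.tsum_eq_zero_add]
  simp only [Nat.cast_zero, zero_add, Real.one_rpow, add_sub_cancel_left]
  refine tsum_congr fun n => ?_
  push_cast
  congr 1
  ring

theorem rzeta_sub_one_pos {x : ℝ} (hx : 1 < x) : 0 < rzeta x - 1 := by
  rw [rzeta_sub_one hx]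
  exact (summable_add_two_rpow hx).tsum_pos (fun n => by positivity) 0 (by positivity)

/-- Termwise comparison of the two tails: the coefficient `a` only has to exceed `x / 2`. -/
theorem mul_rzeta_succ_lt {x a : ℝ} (hx : 1 < x) (ha : x < 2 * a) :
    x * (rzeta (x + 1) - 1) < a * (rzeta x - 1) := by
  have hx' : 1 < x + 1 := by linarith
  rw [rzeta_sub_one hx, rzeta_sub_one hx', ← tsum_mul_left, ← tsum_mul_left]
  have key : ∀ n : ℕ, x * ((n : ℝ) + 2) ^ (-(x + 1)) < a * ((n : ℝ) + 2) ^ (-x) := by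
    intro n
    have hn : (0 : ℝ) < (n : ℝ) + 2 := by positivity
    have hn0 : (0 : ℝ) ≤ n := n.cast_nonneg
    rw [show -(x + 1) = -x - 1 by ring, Real.rpow_sub_one hn.ne', mul_div_assoc', div_lt_iff₀ hn]
    have hp : 0 < ((n : ℝ) + 2) ^ (-x) := by positivity
    have hlt : x < a * ((n : ℝ) + 2) := by nlinarith
    calc x * ((n : ℝ) + 2) ^ (-x) < a * ((n : ℝ) + 2) * ((n : ℝ) + 2) ^ (-x) :=
          mul_lt_mul_of_pos_right hlt hp
      _ = _ := by ring
  exact Summable.tsum_lt_tsum (i := 0) (fun n => (key n).le) (key 0)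
    ((summable_add_two_rpow hx').mul_left x) ((summable_add_two_rpow hx).mul_left a)

theorem eulerBeta_pos {x y : ℝ} (hx : 0 < x) (hy : 0 < y) : 0 < eulerBeta x y :=
  div_pos (mul_pos (Real.Gamma_pos_of_pos hx) (Real.Gamma_pos_of_pos hy))
    (Real.Gamma_pos_of_pos (add_pos hx hy))

theorem eulerBeta_add_one {x y : ℝ} (hx : 0 < x) (hy : 0 < y) :
    eulerBeta x (y + 1) = y / (x + y) * eulerBeta x y := by
  have hxy : 0 < x + y := add_pos hx hy
  have h := (Real.Gamma_pos_of_pos hxy).ne'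
  rw [eulerBeta, eulerBeta, ← add_assoc, Real.Gamma_add_one hy.ne', Real.Gamma_add_one hxy.ne']
  field_simp

theorem hzetaCoeff_pos {s : ℝ} (hs : 1 < s) {k : ℕ} (hk : s ≤ k) : 0 < hzetaCoeff s k := by
  have hk0 : (0 : ℝ) < k := by linarith
  exact div_pos (rzeta_sub_one_pos (by linarith))
    (mul_pos hk0 (eulerBeta_pos (by linarith) hk0))

theorem hzetaCoeff_succ_lt {s : ℝ} (hs : 1 < s) {k : ℕ} (hk : s ≤ k) :
    hzetaCoeff s (k + 1) < hzetaCoeff s k := by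
  have hk0 : (0 : ℝ) < k := by linarith
  have hs0 : 0 < s := by linarith
  have hB := eulerBeta_pos hs0 hk0
  have h := mul_rzeta_succ_lt (x := (k : ℝ) + s) (a := (k : ℝ) + 1) (by linarith) (by linarith)
  rw [hzetaCoeff, hzetaCoeff, Nat.cast_add_one, eulerBeta_add_one hs0 hk0,
    show (k : ℝ) + 1 + s = k + s + 1 by ring, div_lt_div_iff₀ (by positivity) (by positivity)]
  have hc : 0 < (k : ℝ) * eulerBeta s k / (k + s) := by positivity
  calc (rzeta (k + s + 1) - 1) * (k * eulerBeta s k)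
      = ((k + s) * (rzeta (k + s + 1) - 1)) * (k * eulerBeta s k / (k + s)) := by
        field_simp
    _ < ((k + 1) * (rzeta (k + s) - 1)) * (k * eulerBeta s k / (k + s)) :=
        mul_lt_mul_of_pos_right h hc
    _ = _ := by rw [add_comm s (k : ℝ)]; ring

/-- For fixed `s > 1` and every integer `k ≥ s` the ratio `c(s,k+1)/c(s,k)` is `< 1`;
in particular `k ↦ c(s,k)` is strictly decreasing for `k ≥ ⌈s⌉`. -/
theorem hzetaCoeff_ratio_lt_one (s : ℝ) (hs : 1 < s) :
    (∀ k : ℕ, s ≤ (k : ℝ) → hzetaCoeff s (k + 1) / hzetaCoeff s k < 1) ∧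
      StrictAntiOn (fun k : ℕ => hzetaCoeff s k) {k : ℕ | ⌈s⌉₊ ≤ k} := by
  refine ⟨fun k hk => (div_lt_one (hzetaCoeff_pos hs hk)).2 (hzetaCoeff_succ_lt hs hk), ?_⟩
  intro a ha b _ hab
  have ha' : s ≤ a := Nat.ceil_le.1 ha
  change hzetaCoeff s b < hzetaCoeff s a
  induction b, hab using Nat.le_induction with
  | base => exact hzetaCoeff_succ_lt hs ha'
  | succ n hn ih =>
    have han : a ≤ n := (Nat.le_succ a).trans hn
    have hn' : s ≤ n := ha'.trans (Nat.cast_le.2 han)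
    exact (hzetaCoeff_succ_lt hs hn').trans (ih (Nat.ceil_le.2 hn'))
end

section
/- Let v > 0 be real, let u ∈ ℕ with u ≥ 2 and m ∈ ℕ with m ≥ 1, and set d = (1+(u−1)/v)^{−1}. Then ψ(u+v) − ψ(v) = −log d + (1+d)/(2v) + Σ_{n=1}^m (B_{2n}/(2n))·(1−d^{2n})/v^{2n} − ∫_v^{u+v−1} B_{2m}({w−v})·w^{−2m−1} dw, and moreover |∫_v^{u+v−1} B_{2m}({w−v})·w^{−2m−1} dw| < 2·(1 + 4^{−(m+1)}·(2m+3)/(2m+1))·((2m+1)!/(2π)^{2m+2})·(1−d^{2m+2})/v^{2m+2}. -/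
/-!
The recurrence `ψ(x + 1) = ψ(x) + 1 / x` turns `ψ(u + v) - ψ(v)` into `∑_{k < u} 1 / (v + k)`, to
which Euler–Maclaurin summation applies. Everything happens on one unit interval `[a, a + 1]`,
through the integrals `bernInt k a = ∫₀¹ B_k(x) (x + a)^{-(k+1)} dx`. Integrating by parts
(`bernInt_succ`) relates `bernInt k a` to `bernInt (k + 1) a`; as the odd Bernoulli numbers beyond
`B₁` vanish, iterating gives the Euler–Maclaurin formula on the unit interval (`unit_formula`) and
the relation `bernInt (2m) a = bernInt (2m+2) a - T` (`bernInt_two_step`), where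
`T = B_{2m+2}/(2m+2) · (a^{-(2m+2)} - (a+1)^{-(2m+2)})`.

For the bound, the same relation shows
`bernInt (2m) a = ∫₀¹ (B_{2m+2}(x) - B_{2m+2}) (x + a)^{-(2m+3)} dx`, and the cosine series of the
even Bernoulli polynomials shows that this integrand has the constant sign `(-1)^{m+1}`
(`bernInt_sign`). Hence `bernInt (2m) a` and `bernInt (2m+2) a` have opposite signs, so that
`|bernInt (2m) a| ≤ |T|` (`abs_bernInt_le`). These bounds telescope over the unit intervals, and
`|B_{2m+2}| = 2 (2m+2)! ζ(2m+2) / (2π)^{2m+2}` together with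
`ζ(2k) < 1 + 4^{-k} (2k+1)/(2k-1)` (`zeta_sum_lt`) gives the stated strict inequality.
-/

/-- The digamma function `ψ(x) = Γ'(x) / Γ(x)`. -/
noncomputable def digamma (x : ℝ) : ℝ := deriv Real.Gamma x / Real.Gamma x

/-- The Bernoulli polynomial `B_n(x)`, as a real function. -/
noncomputable def bernPoly (n : ℕ) (x : ℝ) : ℝ :=
  ((Polynomial.bernoulli n).map (algebraMap ℚ ℝ)).eval x

open MeasureTheory intervalIntegral Set

/-! ### The digamma recurrence -/

theorem digamma_add_one {x : ℝ} (hx : 0 < x) : digamma (x + 1) = digamma x + 1 / x := by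
  have hG : DifferentiableAt ℝ Real.Gamma x := Real.differentiableAt_Gamma fun m => by
    have : (0 : ℝ) ≤ m := m.cast_nonneg
    linarith
  have hG1 : DifferentiableAt ℝ Real.Gamma (x + 1) := Real.differentiableAt_Gamma fun m => by
    have : (0 : ℝ) ≤ m := m.cast_nonneg
    linarith
  have h1 : HasDerivAt (fun y => Real.Gamma (y + 1)) (deriv Real.Gamma (x + 1)) x :=
    hG1.hasDerivAt.comp_add_const x 1
  have h2 : HasDerivAt (fun y => y * Real.Gamma y) (1 * Real.Gamma x + x * deriv Real.Gamma x) x :=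
    (hasDerivAt_id x).mul hG.hasDerivAt
  have h3 : (fun y => Real.Gamma (y + 1)) =ᶠ[nhds x] fun y => y * Real.Gamma y := by
    filter_upwards [lt_mem_nhds hx] with y hy using Real.Gamma_add_one hy.ne'
  have h4 := h1.unique (h2.congr_of_eventuallyEq h3)
  have hpos := Real.Gamma_pos_of_pos hx
  rw [digamma, digamma, h4, Real.Gamma_add_one hx.ne']
  field_simp
  ring

theorem digamma_add_nat {v : ℝ} (hv : 0 < v) (n : ℕ) :
    digamma (n + v) - digamma v = ∑ k ∈ Finset.range n, 1 / (v + k) := by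
  induction n with
  | zero => simp
  | succ n ih =>
    have h := digamma_add_one (x := n + v) (by positivity)
    rw [Finset.sum_range_succ, ← ih, show ((n + 1 : ℕ) : ℝ) + v = n + v + 1 by push_cast; ring, h,
      add_comm v (n : ℝ)]
    ring

/-! ### Euler–Maclaurin summation on a unit interval -/

/-- The Euler–Maclaurin remainder integral `∫₀¹ B_k(x) (x + a)^{-(k+1)} dx` of `1 / w` over the
unit interval `[a, a + 1]`, translated to `[0, 1]`. -/
noncomputable def bernInt (k : ℕ) (a : ℝ) : ℝ :=
  ∫ x in (0 : ℝ)..1, bernoulliFun k x / (x + a) ^ (k + 1)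

theorem intervalIntegrable_bern {a : ℝ} (ha : 0 < a) (k n : ℕ) :
    IntervalIntegrable (fun x => bernoulliFun k x / (x + a) ^ n) volume 0 1 := by
  apply ContinuousOn.intervalIntegrable
  refine (continuous_bernoulliFun k).continuousOn.div (by fun_prop) fun x hx => ?_
  rw [uIcc_of_le zero_le_one] at hx
  have : 0 < x + a := by linarith [hx.1]
  positivity

theorem hasDerivAt_inv_pow {a x : ℝ} (hx : 0 < x + a) (n : ℕ) :
    HasDerivAt (fun x => 1 / (x + a) ^ n) (-(n / (x + a) ^ (n + 1))) x := by
  have h := (((hasDerivAt_id x).add_const a).pow n).inv (pow_ne_zero n hx.ne')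
  have hfun : (fun x => 1 / (x + a) ^ n) = ((id · + a) ^ n)⁻¹ := by
    ext y
    simp
  rw [hfun]
  convert! h using 1
  rcases n with _ | n
  · simp
  · simp only [id, Nat.add_sub_cancel, Pi.pow_apply]
    field_simp
    ring

/-- Integration by parts, integrating `B_k` to `B_{k+1} / (k + 1)`. -/
theorem bernInt_succ {a : ℝ} (ha : 0 < a) (k : ℕ) :
    bernInt k a = bernoulliFun (k + 1) 1 / (k + 1) * (1 / (1 + a) ^ (k + 1))
      - bernoulliFun (k + 1) 0 / (k + 1) * (1 / a ^ (k + 1)) + bernInt (k + 1) a := by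
  have hd : ∀ x ∈ uIcc (0 : ℝ) 1,
      HasDerivAt (fun x => bernoulliFun (k + 1) x / (k + 1) * (1 / (x + a) ^ (k + 1)))
        (bernoulliFun k x / (x + a) ^ (k + 1)
          - bernoulliFun (k + 1) x / (x + a) ^ (k + 1 + 1)) x := by
    intro x hx
    rw [uIcc_of_le zero_le_one] at hx
    have hpos : 0 < x + a := by linarith [hx.1]
    convert! (antideriv_bernoulliFun k x).mul (hasDerivAt_inv_pow hpos (k + 1)) using 1
    have : (k : ℝ) + 1 ≠ 0 := by positivity
    push_cast
    field_simp
    ring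
  have h := integral_eq_sub_of_hasDerivAt hd
    ((intervalIntegrable_bern ha k _).sub (intervalIntegrable_bern ha (k + 1) _))
  rw [integral_sub (intervalIntegrable_bern ha k _) (intervalIntegrable_bern ha (k + 1) _)] at h
  simp only [zero_add] at h
  rw [bernInt, bernInt]
  linarith

theorem bernInt_zero {a : ℝ} (ha : 0 < a) :
    bernInt 0 a = Real.log (a + 1) - Real.log a := by
  have h0 : (0 : ℝ) ∉ uIcc (0 + a) (1 + a) := by
    rw [uIcc_of_le (by linarith)]
    intro h
    linarith [h.1]
  simp only [bernInt, bernoulliFun_zero, zero_add, pow_one]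
  rw [integral_comp_add_right (fun x => 1 / x), integral_one_div h0,
    Real.log_div (by linarith) (by linarith), zero_add, add_comm a 1]

/-- The `n`-th Euler–Maclaurin correction term of `1 / w` on `[a, b]`. -/
noncomputable def corrTerm (n : ℕ) (a b : ℝ) : ℝ :=
  (bernoulli (2 * n) : ℝ) / (2 * (n : ℝ)) * (1 / a ^ (2 * n) - 1 / b ^ (2 * n))

theorem corrTerm_add (n : ℕ) (a b c : ℝ) :
    corrTerm n a b + corrTerm n b c = corrTerm n a c := by
  unfold corrTerm
  ring

theorem bernInt_odd {a : ℝ} (ha : 0 < a) (k : ℕ) :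
    bernInt (2 * k + 1) a = bernInt (2 * k + 2) a - corrTerm (k + 1) a (a + 1) := by
  rw [bernInt_succ ha, bernoulliFun_endpoints_eq_of_ne_one (by lia), bernoulliFun_eval_zero,
    corrTerm]
  rw [show 2 * (k + 1) = 2 * k + 1 + 1 by ring, add_comm 1 a]
  push_cast
  ring

theorem bernInt_even {a : ℝ} (ha : 0 < a) {k : ℕ} (hk : 1 ≤ k) :
    bernInt (2 * k) a = bernInt (2 * k + 1) a := by
  rw [bernInt_succ ha, bernoulliFun_endpoints_eq_of_ne_one (by lia), bernoulliFun_eval_zero,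
    bernoulli_eq_zero_of_odd (by simp) (by lia)]
  simp

theorem bernInt_two_step {a : ℝ} (ha : 0 < a) {k : ℕ} (hk : 1 ≤ k) :
    bernInt (2 * k) a = bernInt (2 * k + 2) a - corrTerm (k + 1) a (a + 1) := by
  rw [bernInt_even ha hk, bernInt_odd ha]

/-- The Euler–Maclaurin formula for `1 / w` on the unit interval `[a, a + 1]`. -/
theorem unit_formula {a : ℝ} (ha : 0 < a) {m : ℕ} (hm : 1 ≤ m) :
    (1 / a + 1 / (a + 1)) / 2 = Real.log (a + 1) - Real.log a
      + ∑ n ∈ Finset.Icc 1 m, corrTerm n a (a + 1) - bernInt (2 * m) a := by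
  induction m, hm using Nat.le_induction with
  | base =>
    have h0 := bernInt_succ ha 0
    have h1 := bernInt_odd ha 0
    rw [bernInt_zero ha] at h0
    norm_num [add_comm 1 a] at h0 h1 ⊢
    linarith
  | succ k hk ih =>
    rw [Finset.sum_Icc_succ_top (by lia), ih, bernInt_two_step ha hk,
      show 2 * (k + 1) = 2 * k + 2 by ring]
    ring

/-! ### Sign and size of the remainder -/

/-- The cosine series has nonnegative coefficients, hence is maximal at `0`. -/
theorem bernoulliFun_sign {k : ℕ} (hk : k ≠ 0) {x : ℝ} (hx : x ∈ Icc (0 : ℝ) 1) :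
    (-1) ^ (k + 1) * (bernoulliFun (2 * k) x - bernoulliFun (2 * k) 0) ≤ 0 := by
  have h1 := hasSum_one_div_nat_pow_mul_cos hk hx
  have h0 := hasSum_one_div_nat_pow_mul_cos hk (x := 0) (by simp)
  have h := hasSum_le (fun n => by
    rw [mul_zero, Real.cos_zero]
    exact mul_le_mul_of_nonneg_left (Real.cos_le_one _) (by positivity)) h1 h0
  have hc : 0 < (2 * Real.pi) ^ (2 * k) / 2 / ((2 * k).factorial : ℝ) := by positivity
  change _ * bernoulliFun (2 * k) x ≤ _ * bernoulliFun (2 * k) 0 at h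
  by_contra! hcon
  have := mul_pos hc hcon
  have e : ∀ y : ℝ, (-1 : ℝ) ^ (k + 1) * (2 * Real.pi) ^ (2 * k) / 2 / ((2 * k).factorial : ℝ) * y
    = (2 * Real.pi) ^ (2 * k) / 2 / ((2 * k).factorial : ℝ) * ((-1) ^ (k + 1) * y) := by
    intro y
    ring
  rw [e, e] at h
  linarith

/-- The correction term is the integral of the constant `B_{2k}` against the same kernel as in
`bernInt`. -/
theorem corrTerm_eq_integral {a : ℝ} (ha : 0 < a) {k : ℕ} (hk : 1 ≤ k) :
    corrTerm k a (a + 1)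
      = ∫ x in (0 : ℝ)..1, bernoulliFun (2 * k) 0 * (bernoulliFun 0 x / (x + a) ^ (2 * k + 1)) := by
  have hk0 : (k : ℝ) ≠ 0 := by positivity
  have hd : ∀ x ∈ uIcc (0 : ℝ) 1,
      HasDerivAt (fun x => -(1 / (2 * (k : ℝ))) * (1 / (x + a) ^ (2 * k)))
        (bernoulliFun 0 x / (x + a) ^ (2 * k + 1)) x := by
    intro x hx
    rw [uIcc_of_le zero_le_one] at hx
    have hpos : 0 < x + a := by linarith [hx.1]
    convert! (hasDerivAt_inv_pow hpos (2 * k)).const_mul (-(1 / (2 * (k : ℝ)))) using 1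
    rw [bernoulliFun_zero]
    push_cast
    field_simp
  rw [intervalIntegral.integral_const_mul, integral_eq_sub_of_hasDerivAt hd (intervalIntegrable_bern ha 0 _),
    bernoulliFun_eval_zero, corrTerm, zero_add, add_comm 1 a]
  ring

theorem bernInt_sign {a : ℝ} (ha : 0 < a) {m : ℕ} (hm : 1 ≤ m) :
    (-1) ^ m * bernInt (2 * m) a ≤ 0 := by
  rw [bernInt_two_step ha hm, corrTerm_eq_integral ha (by lia), bernInt,
    show 2 * (m + 1) = 2 * m + 2 by ring,
    ← integral_sub (intervalIntegrable_bern ha _ _)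
      ((intervalIntegrable_bern ha 0 _).const_mul _), ← intervalIntegral.integral_const_mul]
  rw [← neg_nonneg, ← intervalIntegral.integral_neg]
  refine integral_nonneg zero_le_one fun x hx => ?_
  have hpos : 0 < x + a := by linarith [hx.1]
  have hs := bernoulliFun_sign (k := m + 1) (by lia) hx
  rw [show 2 * (m + 1) = 2 * m + 2 by ring] at hs
  have e : -((-1 : ℝ) ^ m * (bernoulliFun (2 * m + 2) x / (x + a) ^ (2 * m + 2 + 1)
      - bernoulliFun (2 * m + 2) 0 * (bernoulliFun 0 x / (x + a) ^ (2 * m + 2 + 1))))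
      = -((-1) ^ (m + 1 + 1) * (bernoulliFun (2 * m + 2) x - bernoulliFun (2 * m + 2) 0))
        / (x + a) ^ (2 * m + 2 + 1) := by
    rw [bernoulliFun_zero]
    ring
  rw [e]
  exact div_nonneg (by linarith) (by positivity)

/-- The remainder is at most the first omitted term in absolute value, because consecutive
remainders have opposite signs. -/
theorem abs_bernInt_le {a : ℝ} (ha : 0 < a) {m : ℕ} (hm : 1 ≤ m) :
    |bernInt (2 * m) a| ≤ (-1) ^ m * corrTerm (m + 1) a (a + 1) := by
  have h1 := bernInt_sign ha hm
  have h2 := bernInt_sign ha (m := m + 1) (by lia)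
  have h3 := bernInt_two_step ha hm
  have h4 : |bernInt (2 * m) a| = |(-1) ^ m * bernInt (2 * m) a| := by
    simp [abs_mul]
  rw [h4, abs_of_nonpos h1, h3]
  rw [show 2 * (m + 1) = 2 * m + 2 by ring, pow_succ] at h2
  linarith

/-! ### Bounds for zeta sums and Bernoulli numbers -/

/-- Termwise comparison of `n^{-(p+1)}` with `∫_{n-1}^n x^{-(p+1)} dx`, here for `n = t + 1`. -/
theorem inv_pow_lt_sub {t : ℝ} (ht : 0 < t) {p : ℕ} (hp : 1 ≤ p) :
    1 / (t + 1) ^ (p + 1) < 1 / p * (1 / t ^ p - 1 / (t + 1) ^ p) := by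
  have hp0 : (0 : ℝ) < p := by exact_mod_cast hp
  -- Bernoulli's inequality for `(1 + 1 / t) ^ p`
  have hB := one_add_mul_le_pow (a := 1 / t) (by
    have : 0 < 1 / t := by positivity
    linarith) p
  have e : (1 + 1 / t) ^ p = (t + 1) ^ p / t ^ p := by
    rw [← div_pow]
    congr 1
    field_simp
  rw [e] at hB
  have hlt : (p : ℝ) * (1 / (t + 1)) < p * (1 / t) := by
    apply mul_lt_mul_of_pos_left _ hp0
    apply one_div_lt_one_div_of_lt ht
    linarith
  have h5 : (p : ℝ) * (1 / (t + 1)) < (t + 1) ^ p / t ^ p - 1 := by linarith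
  have h6 := mul_lt_mul_of_pos_left h5 (show 0 < 1 / p * (1 / (t + 1) ^ p) by positivity)
  calc 1 / (t + 1) ^ (p + 1) = 1 / p * (1 / (t + 1) ^ p) * (p * (1 / (t + 1))) := by
        rw [pow_succ]
        field_simp
    _ < _ := h6
    _ = _ := by field_simp

theorem zeta_sum_lt {k : ℕ} (hk : 2 ≤ k) {Z : ℝ}
    (hZ : HasSum (fun n : ℕ => 1 / (n : ℝ) ^ (2 * k)) Z) :
    Z < 1 + 1 / 4 ^ k * ((2 * (k : ℝ) + 1) / (2 * (k : ℝ) - 1)) := by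
  obtain ⟨p, hp⟩ : ∃ p, 2 * k = p + 1 := ⟨2 * k - 1, by lia⟩
  have hp1 : 1 ≤ p := by lia
  have hpR : 2 * (k : ℝ) = p + 1 := by exact_mod_cast hp
  have hp0 : (0 : ℝ) < p := by exact_mod_cast hp1
  have h4 : (4 : ℝ) ^ k = 2 * 2 ^ p := by
    rw [show (4 : ℝ) = 2 ^ 2 by norm_num, ← pow_mul, hp, pow_succ]
    ring
  rw [hp] at hZ
  -- the sum is split after `n = 3`: the strict comparison at `n = 3` survives the limit
  have hpart : ∀ N : ℕ, ∑ n ∈ Finset.range (N + 4), 1 / (n : ℝ) ^ (p + 1)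
      ≤ 1 + 1 / 2 ^ (p + 1) + 1 / 3 ^ (p + 1) + 1 / p * (1 / 3 ^ p - 1 / ((N : ℝ) + 3) ^ p) := by
    intro N
    induction N with
    | zero => simp [Finset.sum_range_succ]
    | succ N ih =>
      rw [show N + 1 + 4 = (N + 4) + 1 by ring, Finset.sum_range_succ]
      have h := inv_pow_lt_sub (t := (N : ℝ) + 3) (by positivity) hp1
      rw [show (N : ℝ) + 3 + 1 = N + 4 by ring] at h
      push_cast
      rw [show (N : ℝ) + 1 + 3 = N + 4 by ring]
      linarith
  have hle : Z ≤ 1 + 1 / 2 ^ (p + 1) + 1 / 3 ^ (p + 1) + 1 / p * (1 / 3 ^ p) := by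
    refine le_of_tendsto' ((Filter.tendsto_add_atTop_iff_nat 4).2 hZ.tendsto_sum_nat) fun N =>
      (hpart N).trans ?_
    have : 0 ≤ 1 / (p : ℝ) * (1 / ((N : ℝ) + 3) ^ p) := by positivity
    linarith
  have h3 := inv_pow_lt_sub (t := 2) (by norm_num) hp1
  norm_num only at h3
  have e : 1 + 1 / 4 ^ k * ((2 * (k : ℝ) + 1) / (2 * (k : ℝ) - 1))
      = 1 + 1 / 2 ^ (p + 1) + 1 / p * (1 / 2 ^ p) := by
    rw [h4, hpR, pow_succ, show (p : ℝ) + 1 - 1 = p by ring]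
    field_simp
    ring
  rw [e]
  have e3 : (1 : ℝ) / p * (1 / 2 ^ p - 1 / 3 ^ p) = 1 / p * (1 / 2 ^ p) - 1 / p * (1 / 3 ^ p) := by
    ring
  norm_num only [one_div] at *
  linarith

/-- Euler's evaluation of `ζ(2m+2)` combined with the bound on the zeta sum. -/
theorem bernoulli_bound {m : ℕ} (hm : 1 ≤ m) :
    (-1) ^ m * ((bernoulli (2 * (m + 1)) : ℝ) / (2 * ((m + 1 : ℕ) : ℝ)))
      < 2 * (1 + 1 / 4 ^ (m + 1) * ((2 * (m : ℝ) + 3) / (2 * (m : ℝ) + 1))) *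
          (((2 * m + 1).factorial : ℝ) / (2 * Real.pi) ^ (2 * m + 2)) := by
  have h0 := hasSum_one_div_nat_pow_mul_cos (k := m + 1) (by lia) (x := 0) (by simp)
  simp only [mul_zero, Real.cos_zero, mul_one] at h0
  have hlt := zeta_sum_lt (by lia) h0
  change _ * bernoulliFun (2 * (m + 1)) 0 < _ at hlt
  rw [bernoulliFun_eval_zero] at hlt
  have e1 : 1 + 1 / 4 ^ (m + 1) * ((2 * ((m + 1 : ℕ) : ℝ) + 1) / (2 * ((m + 1 : ℕ) : ℝ) - 1))
      = 1 + 1 / 4 ^ (m + 1) * ((2 * (m : ℝ) + 3) / (2 * (m : ℝ) + 1)) := by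
    push_cast
    ring
  rw [e1] at hlt
  have hC : 0 < 2 * (((2 * m + 1).factorial : ℝ) / (2 * Real.pi) ^ (2 * m + 2)) := by positivity
  have h := mul_lt_mul_of_pos_left hlt hC
  have hf : ((2 * (m + 1)).factorial : ℝ) = (2 * m + 2) * ((2 * m + 1).factorial : ℝ) := by
    rw [show 2 * (m + 1) = (2 * m + 1) + 1 by ring, Nat.factorial_succ]
    push_cast
    ring
  calc _ = _ := ?_
    _ < _ := h
    _ = _ := by ring
  have : ((2 * m + 1).factorial : ℝ) ≠ 0 := by positivity
  rw [hf, show 2 * (m + 1) = 2 * m + 2 by ring, show m + 1 + 1 = m + 2 by ring, pow_add (-1) m 2]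
  push_cast
  field_simp

/-! ### Summation over unit intervals -/

/-- On `[v + j, v + j + 1]` the argument `{w - v}` equals `w - v - j`, except at the right endpoint,
where the two values `0` and `1` give the same Bernoulli value. -/
theorem bernPoly_fract {m : ℕ} (v : ℝ) (j : ℕ) {w : ℝ} (hw : w ∈ Icc (v + j) (v + j + 1)) :
    bernPoly (2 * m) (Int.fract (w - v)) = bernoulliFun (2 * m) (w - (v + j)) := by
  change bernoulliFun (2 * m) (Int.fract (w - v)) = _
  rcases hw.2.eq_or_lt with h | h
  · have h1 : w - v = ((j + 1 : ℕ) : ℝ) := by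
      push_cast
      linarith
    have h2 : w - (v + j) = 1 := by linarith
    rw [h1, h2, Int.fract_natCast, bernoulliFun_endpoints_eq_of_ne_one (by lia)]
  · congr 1
    rw [Int.fract_eq_iff]
    refine ⟨by linarith [hw.1], by linarith, j, ?_⟩
    push_cast
    ring

theorem integral_piece {m : ℕ} (v : ℝ) (j : ℕ) :
    ∫ w in (v + j)..(v + (j + 1 : ℕ)), bernPoly (2 * m) (Int.fract (w - v)) / w ^ (2 * m + 1)
      = bernInt (2 * m) (v + j) := by
  have h := integral_comp_add_right (a := 0) (b := 1)
    (fun w => bernoulliFun (2 * m) (w - (v + j)) / w ^ (2 * m + 1)) (v + j)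
  simp only [add_sub_cancel_right, zero_add] at h
  rw [bernInt, h, show v + ((j + 1 : ℕ) : ℝ) = 1 + (v + j) by push_cast; ring]
  refine integral_congr fun w hw => ?_
  rw [uIcc_of_le (by linarith), add_comm 1 (v + (j : ℝ))] at hw
  simp only [bernPoly_fract v j hw]

theorem intervalIntegrable_piece {m : ℕ} {v : ℝ} (hv : 0 < v) (j : ℕ) :
    IntervalIntegrable (fun w => bernPoly (2 * m) (Int.fract (w - v)) / w ^ (2 * m + 1)) volume
      (v + j) (v + (j + 1 : ℕ)) := by
  have hle : v + (j : ℝ) ≤ v + (j + 1 : ℕ) := by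
    push_cast
    linarith
  apply ContinuousOn.intervalIntegrable
  rw [uIcc_of_le hle]
  have hc : ContinuousOn (fun w => bernoulliFun (2 * m) (w - (v + j)) / w ^ (2 * m + 1))
      (Icc (v + j) (v + (j + 1 : ℕ))) := by
    refine ContinuousOn.div (by fun_prop) (by fun_prop) fun w hw => ?_
    have hj : (0 : ℝ) ≤ j := j.cast_nonneg
    have : 0 < w := by linarith [hw.1]
    positivity
  refine hc.congr fun w hw => ?_
  simp only
  rw [bernPoly_fract v j ⟨hw.1, by
    have := hw.2
    push_cast at this
    linarith⟩]

theorem integral_eq_sum {m : ℕ} {v : ℝ} (hv : 0 < v) (N : ℕ) :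
    ∫ w in v..(v + N), bernPoly (2 * m) (Int.fract (w - v)) / w ^ (2 * m + 1)
      = ∑ j ∈ Finset.range N, bernInt (2 * m) (v + j) := by
  have h := sum_integral_adjacent_intervals (a := fun j : ℕ => v + (j : ℝ)) (n := N) (μ := volume)
    (fun j _ => intervalIntegrable_piece (m := m) hv j)
  simp only [Nat.cast_zero, add_zero] at h
  rw [← h]
  exact Finset.sum_congr rfl fun j _ => integral_piece v j

theorem sum_corrTerm (n : ℕ) (v : ℝ) (N : ℕ) :
    ∑ j ∈ Finset.range N, corrTerm n (v + j) (v + j + 1) = corrTerm n v (v + N) := by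
  induction N with
  | zero => simp [corrTerm]
  | succ N ih =>
    rw [Finset.sum_range_succ, ih, corrTerm_add]
    push_cast
    rw [add_assoc]

/-- The Euler–Maclaurin formula for `1 / w` on `[v, v + N]`, summing the unit intervals. -/
theorem sum_formula {v : ℝ} (hv : 0 < v) {m : ℕ} (hm : 1 ≤ m) (N : ℕ) :
    ∑ k ∈ Finset.range (N + 1), 1 / (v + k)
      = Real.log (v + N) - Real.log v + (1 / v + 1 / (v + N)) / 2
        + ∑ n ∈ Finset.Icc 1 m, corrTerm n v (v + N)
        - ∑ j ∈ Finset.range N, bernInt (2 * m) (v + j) := by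
  induction N with
  | zero =>
    simp [corrTerm]
  | succ N ih =>
    have h := unit_formula (a := v + N) (by positivity) hm
    have hs : ∑ n ∈ Finset.Icc 1 m, corrTerm n v (v + (N + 1 : ℕ))
        = ∑ n ∈ Finset.Icc 1 m, corrTerm n v (v + N)
          + ∑ n ∈ Finset.Icc 1 m, corrTerm n (v + N) (v + N + 1) := by
      rw [← Finset.sum_add_distrib]
      refine Finset.sum_congr rfl fun n _ => ?_
      rw [corrTerm_add]
      push_cast
      rw [add_assoc]
    rw [Finset.sum_range_succ, ih, hs, Finset.sum_range_succ _ N]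
    push_cast
    rw [← add_assoc]
    linarith

/-- Euler–Maclaurin formula for the digamma function: with `d = (1+(u-1)/v)⁻¹`,
`ψ(u+v) - ψ(v) = -log d + (1+d)/(2v) + ∑_{n=1}^m (B_{2n}/(2n))·(1-d^{2n})/v^{2n}
  - ∫_v^{u+v-1} B_{2m}({w-v})·w^{-2m-1} dw`, with the stated bound on the integral. -/
theorem digamma_eulerMaclaurin (v : ℝ) (hv : 0 < v) (u m : ℕ) (hu : 2 ≤ u) (hm : 1 ≤ m)
    (d : ℝ) (hd : d = (1 + ((u : ℝ) - 1) / v)⁻¹) :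
    digamma ((u : ℝ) + v) - digamma v =
        -Real.log d + (1 + d) / (2 * v) +
          (∑ n ∈ Finset.Icc 1 m,
            ((bernoulli (2 * n) : ℝ) / (2 * (n : ℝ))) * ((1 - d ^ (2 * n)) / v ^ (2 * n))) -
          ∫ w in v..((u : ℝ) + v - 1), bernPoly (2 * m) (Int.fract (w - v)) / w ^ (2 * m + 1) ∧
      |∫ w in v..((u : ℝ) + v - 1), bernPoly (2 * m) (Int.fract (w - v)) / w ^ (2 * m + 1)| <
        2 * (1 + 1 / 4 ^ (m + 1) * ((2 * (m : ℝ) + 3) / (2 * (m : ℝ) + 1))) *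
          (((2 * m + 1).factorial : ℝ) / (2 * Real.pi) ^ (2 * m + 2)) *
            ((1 - d ^ (2 * m + 2)) / v ^ (2 * m + 2)) := by
  obtain ⟨N, rfl⟩ : ∃ N, u = N + 1 := ⟨u - 1, by lia⟩
  have hN : 1 ≤ N := by lia
  have hN0 : (0 : ℝ) < N := by exact_mod_cast hN
  have hb : 0 < v + N := by positivity
  have hd' : d = v / (v + N) := by
    rw [hd]
    have : (1 : ℝ) + (N + 1 - 1) / v = (v + N) / v := by
      field_simp
      ring
    push_cast
    rw [this, inv_div]
  have hup : ((N + 1 : ℕ) : ℝ) + v - 1 = v + N := by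
    push_cast
    ring
  have hpow : ∀ k : ℕ, (1 - d ^ k) / v ^ k = 1 / v ^ k - 1 / (v + N) ^ k := by
    intro k
    rw [hd', div_pow]
    field_simp
  rw [hup, integral_eq_sum hv]
  constructor
  · rw [digamma_add_nat hv, sum_formula hv hm, hd', Real.log_div hv.ne' hb.ne', ← hd']
    simp only [hpow]
    have : (1 / v + 1 / (v + N)) / 2 = (1 + d) / (2 * v) := by
      rw [hd']
      field_simp
    rw [this]
    simp only [corrTerm]
    ring
  · have hpos : 0 < 1 / v ^ (2 * m + 2) - 1 / (v + N) ^ (2 * m + 2) := by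
      rw [sub_pos]
      apply one_div_lt_one_div_of_lt (by positivity)
      exact pow_lt_pow_left₀ (by linarith) hv.le (by lia)
    calc |∑ j ∈ Finset.range N, bernInt (2 * m) (v + j)|
        ≤ ∑ j ∈ Finset.range N, |bernInt (2 * m) (v + j)| := Finset.abs_sum_le_sum_abs _ _
      _ ≤ ∑ j ∈ Finset.range N, (-1) ^ m * corrTerm (m + 1) (v + j) (v + j + 1) :=
          Finset.sum_le_sum fun j _ => abs_bernInt_le (by positivity) hm
      _ = (-1) ^ m * ((bernoulli (2 * (m + 1)) : ℝ) / (2 * ((m + 1 : ℕ) : ℝ)))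
            * (1 / v ^ (2 * m + 2) - 1 / (v + N) ^ (2 * m + 2)) := by
          rw [← Finset.mul_sum, sum_corrTerm, corrTerm, ← mul_assoc,
            show 2 * (m + 1) = 2 * m + 2 by ring]
      _ < _ := by
          rw [hpow]
          exact mul_lt_mul_of_pos_right (bernoulli_bound hm) hpos
end

section
/- Let s > 1 be a fixed real number. For every real x with 0 < x < 1/2 one has ζ(s,x) − ζ(s,1−x) = x^{−s} − (1−x)^{−s} + (1+x)^{−s} − 2·Σ_{ℓ=1}^∞ ((ζ(2ℓ−1+s)−1)/((2ℓ−1)·B(s,2ℓ−1)))·x^{2ℓ−1}, where the series converges absolutely. -/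
/-- The Hurwitz zeta-function `ζ(s,x) = ∑_{n≥0} (n+x)^{-s}` for real `s > 1`, `x > 0`. -/
noncomputable def hzeta (s x : ℝ) : ℝ := ∑' n : ℕ, ((n : ℝ) + x) ^ (-s)

/-- The coefficient `Γ(s+k) / (Γ(s) k!)` of `y ^ k` in the expansion of `(1 - y) ^ (-s)`. -/
noncomputable def binomCoeff (s : ℝ) (k : ℕ) : ℝ :=
  Real.Gamma (s + k) / (Real.Gamma s * k.factorial)

lemma binomCoeff_nonneg {s : ℝ} (hs : 0 < s) (k : ℕ) : 0 ≤ binomCoeff s k := by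
  unfold binomCoeff
  have h1 := Real.Gamma_pos_of_pos hs
  have h2 : 0 < Real.Gamma (s + k) := Real.Gamma_pos_of_pos (by positivity)
  positivity

lemma Gamma_add_nat {s : ℝ} (hs : 0 < s) (k : ℕ) :
    Real.Gamma (s + k) = (ascPochhammer ℝ k).eval s * Real.Gamma s := by
  induction k with
  | zero => simp
  | succ k ih =>
    rw [Nat.cast_succ, ← add_assoc, Real.Gamma_add_one (by positivity), ih,
      ascPochhammer_succ_eval]
    ring

lemma choose_eq_binomCoeff {s : ℝ} (hs : 0 < s) (k : ℕ) :
    Ring.choose (s + k - 1) k = binomCoeff s k := by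
  have h := Ring.factorial_nsmul_multichoose_eq_ascPochhammer s k
  rw [Polynomial.ascPochhammer_smeval_eq_eval, nsmul_eq_mul] at h
  have hG := (Real.Gamma_pos_of_pos hs).ne'
  have hk : (k.factorial : ℝ) ≠ 0 := by positivity
  rw [← Ring.multichoose_eq, binomCoeff, Gamma_add_nat hs, ← h]
  field_simp

lemma one_div_mul_eulerBeta {s : ℝ} (k : ℕ) :
    1 / (((k : ℝ) + 1) * eulerBeta s ((k : ℝ) + 1)) = binomCoeff s (k + 1) := by
  rw [eulerBeta, binomCoeff, Real.Gamma_nat_eq_factorial, Nat.factorial_succ]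
  push_cast
  rw [← mul_div_assoc, one_div_div]
  congr 1
  ring

/-- The binomial series for a negative real exponent. -/
lemma hasSum_binomCoeff {s : ℝ} (hs : 0 < s) {y : ℝ} (hy : |y| < 1) :
    HasSum (fun k : ℕ => binomCoeff s k * y ^ k) ((1 - y) ^ (-s)) := by
  have h := (Real.one_div_one_sub_rpow_hasFPowerSeriesOnBall_zero s).hasSum (y := y)
    (by simpa [enorm_eq_nnnorm] using! hy)
  have hy1 : 0 ≤ 1 - y := by linarith [(abs_lt.mp hy).2]
  rw [Real.rpow_neg hy1]
  simpa [FormalMultilinearSeries.ofScalars, choose_eq_binomCoeff hs, mul_comm] using h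

/-- Twice the odd part of the binomial series: the even terms cancel in `(1-y)^{-s} - (1+y)^{-s}`. -/
lemma hasSum_binomCoeff_odd {s : ℝ} (hs : 0 < s) {y : ℝ} (hy : |y| < 1) :
    HasSum (fun ℓ : ℕ => 2 * (binomCoeff s (2 * ℓ + 1) * y ^ (2 * ℓ + 1)))
      ((1 - y) ^ (-s) - (1 + y) ^ (-s)) := by
  have h := (hasSum_binomCoeff hs hy).sub (hasSum_binomCoeff hs (y := -y) (by simpa using hy))
  rw [sub_neg_eq_add] at h
  have hinj : Function.Injective (fun ℓ : ℕ => 2 * ℓ + 1) := fun a b hab => by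
    simp only at hab; omega
  rw [← hinj.hasSum_iff] at h
  · refine h.congr_fun ?_
    intro ℓ
    have ho : Odd (2 * ℓ + 1) := ⟨ℓ, rfl⟩
    simp only [Function.comp_apply, ho.neg_pow]
    ring
  · intro k hk
    rcases Nat.even_or_odd k with he | ⟨ℓ, rfl⟩
    · simp [he.neg_pow]
    · exact absurd ⟨ℓ, rfl⟩ hk

/-- `hasSum_binomCoeff_odd` at `y = x / m`, rescaled by `m ^ (-s)`. -/
lemma hasSum_shifted_odd {s : ℝ} (hs : 0 < s) {x m : ℝ} (hx : 0 < x) (hm : x < m) :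
    HasSum (fun ℓ : ℕ => 2 * (binomCoeff s (2 * ℓ + 1) * x ^ (2 * ℓ + 1) *
        m ^ (-((2 * (ℓ : ℝ) + 1) + s)))) ((m - x) ^ (-s) - (m + x) ^ (-s)) := by
  have hm0 : 0 < m := hx.trans hm
  have hxm : x / m < 1 := (div_lt_one hm0).mpr hm
  have hy : |x / m| < 1 := by rwa [abs_of_pos (by positivity)]
  convert! (hasSum_binomCoeff_odd hs hy).mul_left (m ^ (-s)) using 1
  · funext ℓ
    have : m ^ (-((2 * (ℓ : ℝ) + 1) + s)) = m ^ (-s) / m ^ (2 * ℓ + 1) := by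
      rw [neg_add_rev, ← sub_eq_add_neg, Real.rpow_sub hm0]
      congr 1
      exact_mod_cast Real.rpow_natCast m (2 * ℓ + 1)
    rw [this, div_pow]
    ring
  · rw [mul_sub, ← Real.mul_rpow hm0.le (by linarith), ← Real.mul_rpow hm0.le (by positivity)]
    congr 2 <;> field_simp

lemma summable_shift {s : ℝ} (hs : 1 < s) (x : ℝ) (hx : 0 < x) :
    Summable (fun n : ℕ => ((n : ℝ) + x) ^ (-s)) := by
  have h := (Real.summable_one_div_nat_add_rpow x s).mpr hs
  refine h.congr fun n => ?_
  have : 0 < (n : ℝ) + x := by positivity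
  rw [abs_of_pos this, Real.rpow_neg this.le, one_div]

/-- `rzeta t - 1` is the sum of `m ^ (-t)` over `m = n + 2 ≥ 2`. -/
lemma rzeta_sub_one_s16 {t : ℝ} (ht : 1 < t) :
    HasSum (fun n : ℕ => ((n : ℝ) + 2) ^ (-t)) (rzeta t - 1) := by
  have h := (summable_shift ht 1 one_pos).hasSum
  rw [← hasSum_nat_add_iff' 1] at h
  convert! h using 1
  · funext n
    push_cast
    congr 1
    ring
  · simp [rzeta]

lemma hzeta_eq_add {s : ℝ} (hs : 1 < s) {x : ℝ} (hx : 0 < x) :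
    hzeta s x = x ^ (-s) + hzeta s (1 + x) := by
  unfold hzeta
  rw [(summable_shift hs x hx).tsum_eq_zero_add]
  simp [add_assoc]

/-- For fixed `s > 1` and `0 < x < 1/2`,
`ζ(s,x) - ζ(s,1-x) = x^{-s} - (1-x)^{-s} + (1+x)^{-s}
  - 2∑_{ℓ=1}^∞ ((ζ(2ℓ-1+s)-1)/((2ℓ-1)B(s,2ℓ-1)))x^{2ℓ-1}`, converging absolutely. -/
theorem hzeta_reflection_diff (s : ℝ) (hs : 1 < s) (x : ℝ) (hx : 0 < x) (hx' : x < 1 / 2) :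
    Summable (fun ℓ : ℕ =>
      |(rzeta ((2 * (ℓ : ℝ) + 1) + s) - 1) /
          ((2 * (ℓ : ℝ) + 1) * eulerBeta s (2 * (ℓ : ℝ) + 1)) * x ^ (2 * ℓ + 1)|) ∧
      hzeta s x - hzeta s (1 - x) =
        x ^ (-s) - (1 - x) ^ (-s) + (1 + x) ^ (-s) -
          2 * ∑' ℓ : ℕ,
            (rzeta ((2 * (ℓ : ℝ) + 1) + s) - 1) /
              ((2 * (ℓ : ℝ) + 1) * eulerBeta s (2 * (ℓ : ℝ) + 1)) * x ^ (2 * ℓ + 1) := by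
  have hs0 : 0 < s := by linarith
  -- `F (n, ℓ)` is the `ℓ`-th term of the expansion at `m = n + 2`.
  set F : ℕ × ℕ → ℝ := fun p => 2 * (binomCoeff s (2 * p.2 + 1) * x ^ (2 * p.2 + 1) *
        ((p.1 : ℝ) + 2) ^ (-((2 * (p.2 : ℝ) + 1) + s))) with hF
  have hF0 : 0 ≤ F := fun p => by
    have := binomCoeff_nonneg hs0 (2 * p.2 + 1)
    simp only [hF, Pi.zero_apply]
    positivity
  have hrow (n : ℕ) : HasSum (fun ℓ => F (n, ℓ))
      (((n : ℝ) + (2 - x)) ^ (-s) - ((n : ℝ) + (2 + x)) ^ (-s)) := by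
    have hn : (0 : ℝ) ≤ n := n.cast_nonneg
    have := hasSum_shifted_odd hs0 hx (m := (n : ℝ) + 2) (by linarith)
    rwa [add_sub_assoc, add_assoc] at this
  have hcol (ℓ : ℕ) : HasSum (fun n => F (n, ℓ))
      (2 * ((rzeta ((2 * (ℓ : ℝ) + 1) + s) - 1) /
        ((2 * (ℓ : ℝ) + 1) * eulerBeta s (2 * (ℓ : ℝ) + 1)) * x ^ (2 * ℓ + 1))) := by
    have hℓ : (0 : ℝ) ≤ ℓ := ℓ.cast_nonneg
    have hb := one_div_mul_eulerBeta (s := s) (2 * ℓ)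
    push_cast at hb
    have h := (rzeta_sub_one_s16 (t := (2 * (ℓ : ℝ) + 1) + s) (by linarith)).mul_left
      (2 * (binomCoeff s (2 * ℓ + 1) * x ^ (2 * ℓ + 1)))
    convert! h using 1
    · funext n
      simp only [hF]
      ring
    · rw [← hb]
      ring
  have hs1 := summable_shift hs (2 - x) (by linarith)
  have hs2 := summable_shift hs (2 + x) (by linarith)
  have hSum : Summable F := by
    rw [summable_prod_of_nonneg hF0]
    refine ⟨fun n => (hrow n).summable, ?_⟩
    simp_rw [(hrow _).tsum_eq]
    exact hs1.sub hs2
  have hL := hSum.hasSum.prod_fiberwise hrow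
  have hR := ((Equiv.prodComm ℕ ℕ).hasSum_iff.mpr hSum.hasSum).prod_fiberwise hcol
  have hD := (hs1.hasSum.sub hs2.hasSum).unique hL
  have hR' := hR.div_const 2
  simp only [mul_div_cancel_left₀ _ (two_ne_zero' ℝ)] at hR'
  refine ⟨hR'.summable.abs, ?_⟩
  rw [hR'.tsum_eq, ← hD, hzeta_eq_add hs hx, hzeta_eq_add hs (show 0 < 1 + x by linarith),
    hzeta_eq_add hs (show 0 < 1 - x by linarith)]
  rw [show 1 + (1 + x) = 2 + x by ring, show 1 + (1 - x) = 2 - x by ring]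
  unfold hzeta
  ring
end
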